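/- Let G be the Barnes G-function defined by G(z+1) := exp(-z·ζ'(0) - γz²/2 - (z²+z)/2) · ∏_{k=1}^∞ (1+z/k)^k · exp(-z + z²/(2k)). Then as x → ∞ along the positive reals, log G(x+1) = (x²/2 - 1/12)·log(x+1) - (3/4)x² - x/2 + 1/4 - x·ζ'(0) + ζ'(-1) - 1/(12(x+1)) + O(x^{-2}). -/

import Mathlib

open Filter Topology

noncomputable section

/-- The `k`-th factor (for `k ≥ 1`, indexed by `k-1 : ℕ`) of the Weierstrass product defining
the Barnes `G`-function: `(1 + z/k)^k · exp(-z + z²/(2k))`. -/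
def barnesTerm (z : ℂ) (k : ℕ) : ℂ :=
  (1 + z / ((k : ℂ) + 1)) ^ (k + 1) * Complex.exp (-z + z ^ 2 / (2 * ((k : ℂ) + 1)))

/-- The Barnes `G`-function, defined via
`G(z+1) = exp(-z·ζ'(0) - γz²/2 - (z²+z)/2) · ∏_{k=1}^∞ (1+z/k)^k · exp(-z + z²/(2k))`. -/
def BarnesG (w : ℂ) : ℂ :=
  Complex.exp (-(w - 1) * deriv riemannZeta 0 -
      (Real.eulerMascheroniConstant : ℂ) * (w - 1) ^ 2 / 2 - ((w - 1) ^ 2 + (w - 1)) / 2) *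
    ∏' k : ℕ, barnesTerm (w - 1) k

/-!
Taking logarithms in the product, `log G(x + 1)` becomes the limit of
`∑ n ≤ N, n log (n + x) - ∑ n ≤ N, n log n` plus elementary terms. The Euler–Maclaurin formula for
`t log (t + x)`, whose fourth derivative is `O((t + x)⁻³)`, evaluates the first sum up to an error
`O(∑ (k + x)⁻³) = O(x⁻²)`, uniformly in `N`. The constant in the expansion of the second sum is
`1/12 - ζ'(-1)`: by the Euler–Maclaurin formula for `(s - 1) t ^ (-s)`, the corrected partial sums
of `(s - 1) ζ(s)` converge locally uniformly for `re s > -3`, hence so do their derivatives, and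
these can be evaluated at `s = -1`.
-/

section EulerMaclaurin

variable {E : Type*} [NormedAddCommGroup E] [NormedSpace ℝ E]

/-- The part `F + f / 2 + f' / 12` of the Euler–Maclaurin summation formula for `f` that is
evaluated at the endpoints, where `F` is a primitive of `f` and `f'` its derivative. -/
def eulerMaclaurinMain (F f f' : ℝ → E) (t : ℝ) : E :=
  F t + (1 / 2 : ℝ) • f t + (1 / 12 : ℝ) • f' t

/-- The error made by the Euler–Maclaurin formula of order four on the interval `[t, t + 1]`; the
sum over the interval consists of the value at the right endpoint. -/
def eulerMaclaurinRemainder (F f f' : ℝ → E) (t : ℝ) : E :=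
  f (t + 1) - (eulerMaclaurinMain F f f' (t + 1) - eulerMaclaurinMain F f f' t)

theorem sum_eq_eulerMaclaurinMain_add_sum_remainder (F f f' : ℝ → E) (a : ℝ) (N : ℕ) :
    ∑ k ∈ Finset.range N, f (a + k + 1) =
      eulerMaclaurinMain F f f' (a + N) - eulerMaclaurinMain F f f' a +
        ∑ k ∈ Finset.range N, eulerMaclaurinRemainder F f f' (a + k) := by
  have telescope := Finset.sum_range_sub (fun k : ℕ => eulerMaclaurinMain F f f' (a + k)) N
  simp only [Nat.cast_zero, add_zero, Nat.cast_add, Nat.cast_one, ← add_assoc] at telescope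
  simp only [eulerMaclaurinRemainder, Finset.sum_sub_distrib, telescope]
  abel

theorem sq_mul_one_sub_sq_le {u : ℝ} (h₀ : 0 ≤ u) (h₁ : u ≤ 1) : u ^ 2 * (1 - u) ^ 2 ≤ 1 / 16 := by
  have amgm : u * (1 - u) ≤ 1 / 4 := by nlinarith [sq_nonneg (u - 1 / 2)]
  calc u ^ 2 * (1 - u) ^ 2 = (u * (1 - u)) ^ 2 := by ring
    _ ≤ (1 / 4) ^ 2 := pow_le_pow_left₀ (mul_nonneg h₀ (sub_nonneg.2 h₁)) amgm 2
    _ = 1 / 16 := by norm_num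

theorem norm_eulerMaclaurinRemainder_le {F f f₁ f₂ f₃ f₄ : ℝ → E} {a M : ℝ}
    (hF : ∀ t ∈ Set.Icc a (a + 1), HasDerivAt F (f t) t)
    (hf : ∀ t ∈ Set.Icc a (a + 1), HasDerivAt f (f₁ t) t)
    (hf₁ : ∀ t ∈ Set.Icc a (a + 1), HasDerivAt f₁ (f₂ t) t)
    (hf₂ : ∀ t ∈ Set.Icc a (a + 1), HasDerivAt f₂ (f₃ t) t)
    (hf₃ : ∀ t ∈ Set.Icc a (a + 1), HasDerivAt f₃ (f₄ t) t)
    (hM : ∀ t ∈ Set.Icc a (a + 1), ‖f₄ t‖ ≤ M) :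
    ‖eulerMaclaurinRemainder F f f₁ a‖ ≤ M / 384 := by
  -- Repeated integration by parts against the Bernoulli polynomials `Bₙ(u)`, `u = t - a`, with the
  -- constant of `B₄` chosen such that the last weight vanishes at both endpoints.
  let P : ℝ → E := fun t => F t - ((t - a) - 1 / 2) • f t
    + ((1 - 6 * (t - a) + 6 * (t - a) ^ 2) / 12) • f₁ t
    - (((t - a) * (1 - (t - a)) * (1 - 2 * (t - a))) / 12) • f₂ t
    + ((t - a) ^ 2 * (1 - (t - a)) ^ 2 / 24) • f₃ t
  have deriv_P : ∀ t ∈ Set.Icc a (a + 1),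
      HasDerivAt P (((t - a) ^ 2 * (1 - (t - a)) ^ 2 / 24) • f₄ t) t := by
    intro t ht
    have hu : HasDerivAt (fun t : ℝ => t - a) 1 t := (hasDerivAt_id t).sub_const a
    have hv : HasDerivAt (fun t : ℝ => 1 - (t - a)) (-1) t := hu.const_sub 1
    have hw : HasDerivAt (fun t : ℝ => 1 - 2 * (t - a)) (-(2 * 1)) t := (hu.const_mul 2).const_sub 1
    have h₀ := (hu.sub_const (1 / 2)).smul (hf t ht)
    have h₁ := ((((hu.const_mul 6).const_sub 1).add ((hu.pow 2).const_mul 6)).div_const 12).smul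
      (hf₁ t ht)
    have h₂ := (((hu.mul hv).mul hw).div_const 12).smul (hf₂ t ht)
    have h₃ := (((hu.pow 2).mul (hv.pow 2)).div_const 24).smul (hf₃ t ht)
    refine (((((hF t ht).sub h₀).add h₁).sub h₂).add h₃).congr_deriv ?_
    simp only [Pi.mul_apply, Pi.pow_apply, Pi.add_apply]
    norm_num
    module
  have norm_deriv_P : ∀ t ∈ Set.Ico a (a + 1),
      ‖((t - a) ^ 2 * (1 - (t - a)) ^ 2 / 24) • f₄ t‖ ≤ M / 384 := by
    intro t ht
    have weight_le := sq_mul_one_sub_sq_le (sub_nonneg.2 ht.1) (by linarith [ht.2] : t - a ≤ 1)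
    rw [norm_smul, Real.norm_of_nonneg (by positivity)]
    calc (t - a) ^ 2 * (1 - (t - a)) ^ 2 / 24 * ‖f₄ t‖ ≤ 1 / 16 / 24 * M := by
          gcongr
          exact hM t (Set.Ico_subset_Icc_self ht)
      _ = M / 384 := by ring
  have remainder_eq : eulerMaclaurinRemainder F f f₁ a = -(P (a + 1) - P a) := by
    simp only [P, eulerMaclaurinRemainder, eulerMaclaurinMain, add_sub_cancel_left, sub_self]
    norm_num
    module
  have mean_value := norm_image_sub_le_of_norm_deriv_le_segment'
    (fun t ht => (deriv_P t ht).hasDerivWithinAt) norm_deriv_P (a + 1)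
    (Set.right_mem_Icc.2 (by linarith))
  rw [add_sub_cancel_left, mul_one] at mean_value
  rwa [remainder_eq, norm_neg]

end EulerMaclaurin

section Zeta

theorem hasDerivAt_ofReal_cpow {t : ℝ} (ht : t ≠ 0) (c : ℂ) :
    HasDerivAt (fun t : ℝ => (t : ℂ) ^ c) (c * (t : ℂ) ^ (c - 1)) t := by
  rcases eq_or_ne c 0 with rfl | hc
  · simpa using hasDerivAt_const t (1 : ℂ)
  · exact hasDerivAt_ofReal_cpow_const ht hc

/-- `eulerMaclaurinMain` for the function `t ↦ (s - 1) * t ^ (-s)`. The factor `s - 1` cancels the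
pole of its primitive at `s = 1`. -/
def zetaMain (t : ℝ) (s : ℂ) : ℂ :=
  eulerMaclaurinMain (fun t : ℝ => -(t : ℂ) ^ (1 - s)) (fun t => (s - 1) * (t : ℂ) ^ (-s))
    (fun t => (s - 1) * (-s * (t : ℂ) ^ (-s - 1))) t

/-- `eulerMaclaurinRemainder` for the function `t ↦ (s - 1) * t ^ (-s)`. -/
def zetaRemainder (t : ℝ) (s : ℂ) : ℂ :=
  eulerMaclaurinRemainder (fun t : ℝ => -(t : ℂ) ^ (1 - s)) (fun t => (s - 1) * (t : ℂ) ^ (-s))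
    (fun t => (s - 1) * (-s * (t : ℂ) ^ (-s - 1))) t

/-- The partial sum of `(s - 1) * ζ(s)` over `1 ≤ n ≤ N`, corrected by its Euler–Maclaurin main
term so as to converge for `-3 < re s`. -/
def zetaApprox (N : ℕ) (s : ℂ) : ℂ :=
  (s - 1) * ∑ k ∈ Finset.range N, ((k : ℂ) + 1) ^ (-s) - zetaMain N s

theorem differentiable_zetaMain {t : ℝ} (ht : 0 < t) : Differentiable ℂ (zetaMain t) := by
  have ht' : (t : ℂ) ≠ 0 := Complex.ofReal_ne_zero.2 ht.ne'
  have hp {g : ℂ → ℂ} (hg : Differentiable ℂ g) : Differentiable ℂ (fun s => (t : ℂ) ^ g s) :=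
    hg.const_cpow (Or.inl ht')
  have := hp (g := fun s => 1 - s) (by fun_prop)
  have := hp (g := fun s => -s) (by fun_prop)
  have := hp (g := fun s => -s - 1) (by fun_prop)
  unfold zetaMain eulerMaclaurinMain
  fun_prop

theorem differentiable_zetaApprox {N : ℕ} (hN : 0 < N) : Differentiable ℂ (zetaApprox N) := by
  have hp (k : ℕ) : Differentiable ℂ (fun s : ℂ => ((k : ℂ) + 1) ^ (-s)) :=
    differentiable_neg.const_cpow (Or.inl (Nat.cast_add_one_ne_zero k))
  have hmain := differentiable_zetaMain (Nat.cast_pos.2 hN : (0 : ℝ) < N)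
  unfold zetaApprox
  fun_prop

theorem norm_zetaRemainder_le {t : ℝ} (ht : 0 < t) {s : ℂ} (hs : -4 ≤ s.re) :
    ‖zetaRemainder t s‖ ≤
      ‖(s - 1) * s * (s + 1) * (s + 2) * (s + 3)‖ * t ^ (-s.re - 4) / 384 := by
  have hpos {u : ℝ} (hu : u ∈ Set.Icc t (t + 1)) : 0 < u := ht.trans_le hu.1
  have hpow {u : ℝ} (hu : u ∈ Set.Icc t (t + 1)) (c : ℂ) :=
    hasDerivAt_ofReal_cpow (hpos hu).ne' c
  refine norm_eulerMaclaurinRemainder_le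
    (M := ‖(s - 1) * s * (s + 1) * (s + 2) * (s + 3)‖ * t ^ (-s.re - 4))
    (f₂ := fun u => (s - 1) * (-s * ((-s - 1) * (u : ℂ) ^ (-s - 1 - 1))))
    (f₃ := fun u => (s - 1) * (-s * ((-s - 1) * ((-s - 1 - 1) * (u : ℂ) ^ (-s - 1 - 1 - 1)))))
    (f₄ := fun u => (s - 1) * (-s * ((-s - 1) * ((-s - 1 - 1) *
      ((-s - 1 - 1 - 1) * (u : ℂ) ^ (-s - 1 - 1 - 1 - 1))))))
    (fun u hu => ?_)
    (fun u hu => (hpow hu _).const_mul _)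
    (fun u hu => ((hpow hu _).const_mul _).const_mul _)
    (fun u hu => (((hpow hu _).const_mul _).const_mul _).const_mul _)
    (fun u hu => ((((hpow hu _).const_mul _).const_mul _).const_mul _).const_mul _)
    (fun u hu => ?_)
  · refine (hpow hu (1 - s)).neg.congr_deriv ?_
    rw [show 1 - s - 1 = -s by ring]
    ring
  · calc _ = ‖(s - 1) * s * (s + 1) * (s + 2) * (s + 3) * (u : ℂ) ^ (-s - 1 - 1 - 1 - 1)‖ := by
          congr 1
          ring
      _ = ‖(s - 1) * s * (s + 1) * (s + 2) * (s + 3)‖ * u ^ (-s.re - 4) := by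
          rw [norm_mul, Complex.norm_cpow_eq_rpow_re_of_pos (hpos hu)]
          congr 2
          simp only [Complex.sub_re, Complex.neg_re, Complex.one_re]
          ring
      _ ≤ ‖(s - 1) * s * (s + 1) * (s + 2) * (s + 3)‖ * t ^ (-s.re - 4) := by
          gcongr ?_ * ?_
          exact Real.rpow_le_rpow_of_nonpos ht hu.1 (by linarith)

theorem summableLocallyUniformlyOn_zetaRemainder :
    SummableLocallyUniformlyOn (fun k : ℕ => zetaRemainder (1 + k)) {s | -3 < s.re} := by
  refine SummableLocallyUniformlyOn_of_locally_bounded (Complex.isOpen_re_gt (-3))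
    fun K hK hKc => ?_
  rcases K.eq_empty_or_nonempty with rfl | hKne
  · exact ⟨0, summable_zero, by simp⟩
  obtain ⟨s₀, hs₀, re_min⟩ := hKc.exists_isMinOn hKne Complex.continuous_re.continuousOn
  obtain ⟨C, hC⟩ := hKc.exists_bound_of_continuousOn
    (f := fun s : ℂ => (s - 1) * s * (s + 1) * (s + 2) * (s + 3)) (by fun_prop)
  have hs₀_re : -3 < s₀.re := hK hs₀
  refine ⟨fun k => C * (1 + k : ℝ) ^ (-s₀.re - 4) / 384, ?_, fun k s hs => ?_⟩
  · have := (summable_nat_add_iff 1).2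
      (Real.summable_nat_rpow.2 (by linarith : -s₀.re - 4 < -1))
    exact ((this.congr fun k => by rw [Nat.cast_succ, add_comm]).mul_left C).div_const 384
  · have re_le : s₀.re ≤ s.re := re_min hs
    refine (norm_zetaRemainder_le (by positivity) (by linarith)).trans ?_
    have : (1 : ℝ) ≤ 1 + k := le_add_of_nonneg_right k.cast_nonneg
    have rpow_le : (1 + k : ℝ) ^ (-s.re - 4) ≤ (1 + k : ℝ) ^ (-s₀.re - 4) :=
      Real.rpow_le_rpow_of_exponent_le this (by linarith)
    exact div_le_div_of_nonneg_right (mul_le_mul (hC s hs) rpow_le (by positivity)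
      ((norm_nonneg _).trans (hC s hs))) (by norm_num)

theorem zetaApprox_succ (N : ℕ) (s : ℂ) :
    zetaApprox (N + 1) s =
      s - 1 - zetaMain 1 s + ∑ k ∈ Finset.range N, zetaRemainder (1 + k) s := by
  have hsum : ∑ k ∈ Finset.range N, (s - 1) * ((1 + k + 1 : ℝ) : ℂ) ^ (-s) =
      zetaMain (1 + N) s - zetaMain 1 s + ∑ k ∈ Finset.range N, zetaRemainder (1 + k) s :=
    sum_eq_eulerMaclaurinMain_add_sum_remainder _ (fun t : ℝ => (s - 1) * (t : ℂ) ^ (-s)) _ 1 N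
  rw [zetaApprox, Finset.sum_range_succ', mul_add, Finset.mul_sum, Nat.cast_zero, zero_add,
    Complex.one_cpow, Nat.cast_succ, add_comm (N : ℝ)]
  push_cast [add_comm (1 : ℂ)] at hsum ⊢
  rw [hsum]
  ring

theorem tendsto_ofReal_cpow_atTop_zero {c : ℂ} (hc : c.re < 0) :
    Tendsto (fun t : ℝ => (t : ℂ) ^ c) atTop (𝓝 0) := by
  rw [tendsto_zero_iff_norm_tendsto_zero]
  refine (tendsto_rpow_neg_atTop (neg_pos.2 hc)).congr' ?_
  filter_upwards [eventually_gt_atTop 0] with t ht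
  rw [Complex.norm_cpow_eq_rpow_re_of_pos ht, neg_neg]

theorem tendsto_zetaMain_atTop_zero {s : ℂ} (hs : 1 < s.re) :
    Tendsto (fun t : ℝ => zetaMain t s) atTop (𝓝 0) := by
  have h₁ := tendsto_ofReal_cpow_atTop_zero (c := 1 - s) (by simpa using hs)
  have h₂ := tendsto_ofReal_cpow_atTop_zero (c := -s) (by rw [Complex.neg_re]; linarith)
  have h₃ := tendsto_ofReal_cpow_atTop_zero (c := -s - 1)
    (by rw [Complex.sub_re, Complex.neg_re, Complex.one_re]; linarith)
  simpa [zetaMain, eulerMaclaurinMain] using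
    (h₁.neg.add ((h₂.const_mul (s - 1)).const_smul (1 / 2 : ℝ))).add
      (((h₃.const_mul (-s)).const_mul (s - 1)).const_smul (1 / 12 : ℝ))

theorem riemannZeta₁_eq_sub_one_mul {s : ℂ} (hs : s ≠ 1) :
    riemannZeta₁ s = (s - 1) * riemannZeta s := by
  rw [riemannZeta_eq_inv_sub_mul hs, mul_inv_cancel_left₀ (sub_ne_zero.2 hs)]

theorem tendsto_zetaApprox_of_one_lt_re {s : ℂ} (hs : 1 < s.re) :
    Tendsto (fun N => zetaApprox N s) atTop (𝓝 (riemannZeta₁ s)) := by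
  have summable_zeta : Summable fun k : ℕ => 1 / ((k : ℂ) + 1) ^ s := by
    simpa using (summable_nat_add_iff 1).2 (Complex.summable_one_div_nat_cpow.2 hs)
  have hzeta := summable_zeta.hasSum.tendsto_sum_nat
  rw [← zeta_eq_tsum_one_div_nat_add_one_cpow hs] at hzeta
  have hmain := (tendsto_zetaMain_atTop_zero hs).comp tendsto_natCast_atTop_atTop
  rw [riemannZeta₁_eq_sub_one_mul (by rintro rfl; simp at hs)]
  simpa [zetaApprox, Complex.cpow_neg] using (hzeta.const_mul (s - 1)).sub hmain

theorem tendstoLocallyUniformlyOn_zetaApprox :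
    TendstoLocallyUniformlyOn (fun N => zetaApprox (N + 1)) riemannZeta₁ atTop
      {s | -3 < s.re} := by
  let g : ℂ → ℂ := fun s => s - 1 - zetaMain 1 s + ∑' k : ℕ, zetaRemainder (1 + k) s
  have tendsto_g : TendstoLocallyUniformlyOn (fun N => zetaApprox (N + 1)) g atTop
      {s | -3 < s.re} := by
    have hconst : TendstoLocallyUniformlyOn (fun (_ : ℕ) (s : ℂ) => s - 1 - zetaMain 1 s)
        (fun s => s - 1 - zetaMain 1 s) atTop {s | -3 < s.re} :=
      fun u hu x _ => ⟨Set.univ, univ_mem, Eventually.of_forall fun _ _ _ => refl_mem_uniformity hu⟩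
    have hsum := summableLocallyUniformlyOn_zetaRemainder.hasSumLocallyUniformlyOn
      |>.tendstoLocallyUniformlyOn_finsetRange
    exact (hconst.add hsum).congr fun N s _ => (zetaApprox_succ N s).symm
  have analytic_g : AnalyticOnNhd ℂ g {s | -3 < s.re} :=
    (tendsto_g.differentiableOn (Eventually.of_forall fun N =>
      (differentiable_zetaApprox N.succ_pos).differentiableOn)
      (Complex.isOpen_re_gt (-3))).analyticOnNhd (Complex.isOpen_re_gt (-3))
  have g_eq_near_two : g =ᶠ[𝓝 2] riemannZeta₁ := by
    filter_upwards [(Complex.isOpen_re_gt 1).mem_nhds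
      (by simp : (1 : ℝ) < (2 : ℂ).re)] with s (hs : 1 < s.re)
    exact tendsto_nhds_unique (tendsto_g.tendsto_at (show -3 < s.re by linarith))
      ((tendsto_add_atTop_iff_nat 1).2 (tendsto_zetaApprox_of_one_lt_re hs))
  exact tendsto_g.congr_right (analytic_g.eqOn_of_preconnected_of_eventuallyEq
    (fun s _ => differentiable_riemannZeta₁.analyticAt s)
    (convex_halfSpace_re_gt (-3)).isPreconnected (by norm_num) g_eq_near_two)

theorem deriv_riemannZeta_conj (s : ℂ) :
    deriv riemannZeta (starRingEnd ℂ s) = starRingEnd ℂ (deriv riemannZeta s) := by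
  have hconj : starRingEnd ℂ ∘ riemannZeta ∘ starRingEnd ℂ = riemannZeta := by
    ext z
    simp [riemannZeta_conj]
  simpa [hconj] using congrFun (deriv_conj_conj (f := riemannZeta)) (starRingEnd ℂ s)

theorem ofReal_re_deriv_riemannZeta (x : ℝ) :
    ((deriv riemannZeta x).re : ℂ) = deriv riemannZeta x := by
  rw [← Complex.conj_eq_iff_re, ← deriv_riemannZeta_conj, Complex.conj_ofReal]

theorem deriv_riemannZeta₁_neg_one :
    deriv riemannZeta₁ (-1) = -1 / 12 - 2 * deriv riemannZeta (-1) := by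
  have zeta_neg_one : riemannZeta (-1) = -1 / 12 := by
    have := riemannZeta_neg_nat_eq_bernoulli 1
    rw [one_add_one_eq_two, bernoulli_two, Nat.cast_one] at this
    rw [this]
    norm_num
  have near : riemannZeta₁ =ᶠ[𝓝 (-1)] fun s => (s - 1) * riemannZeta s := by
    filter_upwards [isOpen_ne.mem_nhds (show (-1 : ℂ) ≠ 1 by norm_num)] with s hs
    exact riemannZeta₁_eq_sub_one_mul hs
  have hderiv := ((hasDerivAt_id (-1 : ℂ)).sub_const 1).mul
    (differentiableAt_riemannZeta (s := -1) (by norm_num)).hasDerivAt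
  rw [near.deriv_eq]
  refine hderiv.deriv.trans ?_
  rw [zeta_neg_one, id]
  ring

theorem hasDerivAt_zetaMain_neg_one {t : ℝ} (ht : 0 < t) :
    HasDerivAt (zetaMain t) ((t ^ 2 * Real.log t + t / 2 + t * Real.log t + 1 / 4
      + Real.log t / 6 : ℝ) : ℂ) (-1) := by
  have ht' : (t : ℂ) ≠ 0 := Complex.ofReal_ne_zero.2 ht.ne'
  have hid := hasDerivAt_id (-1 : ℂ)
  have hF := (hid.const_sub 1).const_cpow (c := (t : ℂ)) (Or.inl ht')
  have hf := (hid.sub_const 1).mul (hid.neg.const_cpow (c := (t : ℂ)) (Or.inl ht'))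
  have hf' := (hid.sub_const 1).mul
    (hid.neg.mul ((hid.neg.sub_const 1).const_cpow (c := (t : ℂ)) (Or.inl ht')))
  refine ((hF.neg.add (hf.const_smul (1 / 2 : ℝ))).add (hf'.const_smul (1 / 12 : ℝ))).congr_deriv ?_
  push_cast [Complex.ofReal_log ht.le]
  simp only [id_eq, sub_neg_eq_add, one_add_one_eq_two, Complex.cpow_ofNat, mul_neg, mul_one,
    neg_neg, one_div, Pi.neg_apply, Complex.cpow_one, one_mul, smul_add, Complex.real_smul,
    Complex.ofReal_inv, Complex.ofReal_ofNat, smul_neg, Pi.mul_apply, sub_self, Complex.cpow_zero]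
  ring

/-- The sequence `∑ n ≤ N, n log n - (N² / 2 + N / 2 + 1 / 12) log N + N² / 4`, whose limit is the
logarithm of the Glaisher–Kinkelin constant. -/
def logGlaisherSeq (N : ℕ) : ℝ :=
  ∑ k ∈ Finset.range N, ((k : ℝ) + 1) * Real.log (k + 1)
    - ((N : ℝ) ^ 2 / 2 + N / 2 + 1 / 12) * Real.log N + (N : ℝ) ^ 2 / 4

theorem sum_range_natCast_add_one (N : ℕ) :
    ∑ k ∈ Finset.range N, ((k : ℝ) + 1) = N * (N + 1) / 2 := by
  induction N with
  | zero => simp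
  | succ N ih =>
    rw [Finset.sum_range_succ, ih]
    push_cast
    ring

theorem hasDerivAt_natCast_cpow_neg_one (k : ℕ) :
    HasDerivAt (fun s : ℂ => ((k : ℂ) + 1) ^ (-s))
      ((-((k + 1 : ℝ) * Real.log (k + 1)) : ℝ) : ℂ) (-1) := by
  refine ((hasDerivAt_id (-1 : ℂ)).neg.const_cpow
    (Or.inl (Nat.cast_add_one_ne_zero k))).congr_deriv ?_
  push_cast [Complex.ofReal_log (by positivity : (0 : ℝ) ≤ k + 1)]
  simp

theorem deriv_zetaApprox_neg_one {N : ℕ} (hN : 0 < N) :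
    deriv (zetaApprox N) (-1) = ((2 * logGlaisherSeq N - 1 / 4 : ℝ) : ℂ) := by
  have hsum := HasDerivAt.fun_sum (u := Finset.range N)
    fun k _ => hasDerivAt_natCast_cpow_neg_one k
  have hderiv := (((hasDerivAt_id (-1 : ℂ)).sub_const 1).mul hsum).sub
    (hasDerivAt_zetaMain_neg_one (Nat.cast_pos.2 hN : (0 : ℝ) < N))
  have sum_id := congrArg ((↑) : ℝ → ℂ) (sum_range_natCast_add_one N)
  push_cast at sum_id
  refine hderiv.deriv.trans ?_
  simp only [id, neg_neg, Complex.cpow_one, sum_id, logGlaisherSeq]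
  push_cast
  simp only [Finset.sum_neg_distrib]
  ring

theorem tendsto_logGlaisherSeq :
    Tendsto logGlaisherSeq atTop (𝓝 (1 / 12 - (deriv riemannZeta (-1)).re)) := by
  have hderiv := ((tendstoLocallyUniformlyOn_zetaApprox.deriv (Eventually.of_forall fun N =>
    (differentiable_zetaApprox N.succ_pos).differentiableOn) (Complex.isOpen_re_gt (-3))).tendsto_at
      (show (-1 : ℂ) ∈ {s : ℂ | -3 < s.re} by norm_num))
  have hre := (Complex.continuous_re.tendsto _).comp hderiv
  simp only [Function.comp_def, deriv_zetaApprox_neg_one (Nat.succ_pos _), Complex.ofReal_re,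
    deriv_riemannZeta₁_neg_one] at hre
  rw [← tendsto_add_atTop_iff_nat 1]
  convert (hre.add_const (1 / 4)).div_const 2 using 2
  · ring
  · simp only [Complex.sub_re, Complex.div_ofNat_re, Complex.neg_re, Complex.one_re, Complex.mul_re,
      Complex.re_ofNat, Complex.im_ofNat, zero_mul, sub_zero]
    ring

end Zeta

section BarnesProduct

theorem isBigO_log_one_add_sub_sum (n : ℕ) :
    (fun u : ℝ => Real.log (1 + u) - ∑ i ∈ Finset.range n, (-1) ^ i * u ^ (i + 1) / (i + 1))
      =O[𝓝 0] fun u => u ^ (n + 1) := by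
  refine Asymptotics.IsBigO.of_bound 2 ?_
  filter_upwards [Metric.ball_mem_nhds (0 : ℝ) one_half_pos] with u hu
  rw [Metric.mem_ball, dist_zero_right, Real.norm_eq_abs] at hu
  have taylor := Real.abs_log_sub_add_sum_range_le (x := -u) (by rw [abs_neg]; linarith) n
  have sum_eq : ∑ i ∈ Finset.range n, (-u) ^ (i + 1) / ((i : ℝ) + 1) =
      -∑ i ∈ Finset.range n, (-1) ^ i * u ^ (i + 1) / ((i : ℝ) + 1) := by
    rw [← Finset.sum_neg_distrib]
    refine Finset.sum_congr rfl fun i _ => ?_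
    rw [neg_pow, pow_succ (-1)]
    ring
  rw [sum_eq, sub_neg_eq_add, abs_neg, neg_add_eq_sub] at taylor
  rw [Real.norm_eq_abs, norm_pow, Real.norm_eq_abs]
  calc _ ≤ |u| ^ (n + 1) / (1 - |u|) := taylor
    _ ≤ |u| ^ (n + 1) / (1 / 2) := by gcongr; linarith
    _ = 2 * |u| ^ (n + 1) := by ring

/-- The logarithm of `barnesTerm x k` for real `x > -1`. -/
def logBarnesTerm (x : ℝ) (k : ℕ) : ℝ :=
  (k + 1) * Real.log (1 + x / (k + 1)) - x + x ^ 2 / (2 * (k + 1))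

theorem tendsto_div_natCast_add_one_nhds_zero (x : ℝ) :
    Tendsto (fun k : ℕ => x / ((k : ℝ) + 1)) atTop (𝓝 0) := by
  simpa [div_eq_mul_inv] using tendsto_one_div_add_atTop_nhds_zero_nat.const_mul x

theorem summable_logBarnesTerm (x : ℝ) : Summable (logBarnesTerm x) := by
  have hlog := (isBigO_log_one_add_sub_sum 2).comp_tendsto (tendsto_div_natCast_add_one_nhds_zero x)
  have hterm : logBarnesTerm x =O[atTop] fun k : ℕ => ((k : ℝ) + 1) * (x / (k + 1)) ^ 3 := by
    refine ((Asymptotics.isBigO_refl (fun k : ℕ => (k : ℝ) + 1) atTop).mul hlog).congr_left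
      fun k => ?_
    simp only [logBarnesTerm, Function.comp_apply, Finset.sum_range_succ, Finset.sum_range_zero]
    push_cast
    field_simp
    ring
  have summable_sq : Summable fun k : ℕ => 1 / ((k : ℝ) + 1) ^ 2 := by
    simpa using (summable_nat_add_iff 1).2 (Real.summable_one_div_nat_pow.2 one_lt_two)
  refine summable_of_isBigO_nat (summable_sq.mul_left (x ^ 3)) (hterm.congr_right fun k => ?_)
  field_simp

theorem barnesTerm_ofReal {x : ℝ} (hx : -1 < x) (k : ℕ) :
    barnesTerm x k = Complex.exp (logBarnesTerm x k) := by
  have hk : (0 : ℝ) < k + 1 := by positivity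
  have hpos : 0 < 1 + x / (k + 1) := by
    rw [← sub_neg_eq_add, sub_pos, ← neg_div, div_lt_one hk]
    linarith [(k.cast_nonneg : (0 : ℝ) ≤ k)]
  have hpow : (1 + x / ((k : ℝ) + 1)) ^ (k + 1) =
      Real.exp ((k + 1) * Real.log (1 + x / (k + 1))) := by
    rw [← Nat.cast_succ, Real.exp_nat_mul, Real.exp_log (by rwa [Nat.cast_succ])]
  rw [← Complex.ofReal_exp, logBarnesTerm, sub_add, sub_eq_add_neg, Real.exp_add, ← hpow,
    barnesTerm]
  push_cast
  ring_nf

/-- The logarithm of `BarnesG (x + 1)` for real `x > -1`. -/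
def logBarnesG (x : ℝ) : ℝ :=
  -x * (deriv riemannZeta 0).re - Real.eulerMascheroniConstant * x ^ 2 / 2 - (x ^ 2 + x) / 2
    + ∑' k, logBarnesTerm x k

theorem log_barnesG_add_one {x : ℝ} (hx : -1 < x) :
    Complex.log (BarnesG (x + 1)) = logBarnesG x := by
  have hprod : ∏' k, barnesTerm x k = Complex.exp (∑' k, logBarnesTerm x k : ℝ) := by
    have := (Complex.hasSum_ofReal.2 (summable_logBarnesTerm x).hasSum).cexp
    exact (this.congr_fun fun k => (barnesTerm_ofReal hx k)).tprod_eq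
  have zeta_deriv_zero := ofReal_re_deriv_riemannZeta 0
  rw [Complex.ofReal_zero] at zeta_deriv_zero
  have exp_eq : BarnesG (x + 1) = Real.exp (logBarnesG x) := by
    rw [BarnesG, add_sub_cancel_right, hprod, ← Complex.exp_add, ← zeta_deriv_zero, logBarnesG]
    push_cast
    rfl
  rw [exp_eq, ← Complex.ofReal_log (Real.exp_pos _).le, Real.log_exp]

theorem sum_range_logBarnesTerm {x : ℝ} (hx : -1 < x) (N : ℕ) :
    ∑ k ∈ Finset.range N, logBarnesTerm x k =
      ∑ k ∈ Finset.range N, ((k : ℝ) + 1) * Real.log (k + 1 + x)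
        - ∑ k ∈ Finset.range N, ((k : ℝ) + 1) * Real.log (k + 1)
        - N * x + x ^ 2 / 2 * harmonic N := by
  have log_split (k : ℕ) :
      Real.log (1 + x / (k + 1)) = Real.log (k + 1 + x) - Real.log (k + 1) := by
    have hk : (0 : ℝ) < k + 1 := by positivity
    rw [← Real.log_div (by linarith [(k.cast_nonneg : (0 : ℝ) ≤ k)]) hk.ne', add_div,
      div_self hk.ne']
  simp only [logBarnesTerm, log_split, mul_sub, Finset.sum_add_distrib, Finset.sum_sub_distrib,
    Finset.sum_const, Finset.card_range, nsmul_eq_mul, harmonic, Finset.mul_sum, Rat.cast_sum]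
  congr 1
  refine Finset.sum_congr rfl fun k _ => ?_
  push_cast
  field_simp

end BarnesProduct

section Asymptotics

/-- `eulerMaclaurinMain` for the function `t ↦ t * log (t + x)`. -/
def logShiftMain (x t : ℝ) : ℝ :=
  eulerMaclaurinMain (fun t => (t ^ 2 - x ^ 2) / 2 * Real.log (t + x) - t ^ 2 / 4 + t * x / 2)
    (fun t => t * Real.log (t + x)) (fun t => Real.log (t + x) + t / (t + x)) t

/-- `eulerMaclaurinRemainder` for the function `t ↦ t * log (t + x)`. -/
def logShiftRemainder (x t : ℝ) : ℝ :=
  eulerMaclaurinRemainder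
    (fun t => (t ^ 2 - x ^ 2) / 2 * Real.log (t + x) - t ^ 2 / 4 + t * x / 2)
    (fun t => t * Real.log (t + x)) (fun t => Real.log (t + x) + t / (t + x)) t

theorem hasDerivAt_primitive_mul_log_add {x t : ℝ} (h : t + x ≠ 0) :
    HasDerivAt (fun t => (t ^ 2 - x ^ 2) / 2 * Real.log (t + x) - t ^ 2 / 4 + t * x / 2)
      (t * Real.log (t + x)) t := by
  have hlog := ((hasDerivAt_id t).add_const x).log h
  have hsq := hasDerivAt_pow 2 t
  refine (((((hsq.sub_const _).div_const 2).mul hlog).sub (hsq.div_const 4)).add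
    (((hasDerivAt_id t).mul_const x).div_const 2)).congr_deriv ?_
  simp only [id]
  field_simp
  ring

theorem norm_logShiftRemainder_le {x a : ℝ} (hx : 0 < x) (ha : 0 ≤ a) :
    ‖logShiftRemainder x a‖ ≤ 1 / (48 * (a + x) ^ 3) := by
  have hpos {t : ℝ} (ht : t ∈ Set.Icc a (a + 1)) : 0 < t + x := by linarith [ht.1]
  have hadd (t : ℝ) : HasDerivAt (fun t => t + x) 1 t := (hasDerivAt_id t).add_const x
  have hlog {t : ℝ} (ht : t ∈ Set.Icc a (a + 1)) := (hadd t).log (hpos ht).ne'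
  have hinv (n : ℕ) {t : ℝ} (ht : t ∈ Set.Icc a (a + 1)) :=
    ((hadd t).fun_pow n).fun_inv (pow_ne_zero n (hpos ht).ne')
  refine (norm_eulerMaclaurinRemainder_le (M := 8 / (a + x) ^ 3)
    (f₂ := fun t => (t + x)⁻¹ + x * ((t + x) ^ 2)⁻¹)
    (f₃ := fun t => -((t + x) ^ 2)⁻¹ - 2 * x * ((t + x) ^ 3)⁻¹)
    (f₄ := fun t => 2 * ((t + x) ^ 3)⁻¹ + 6 * x * ((t + x) ^ 4)⁻¹)
    (fun t ht => hasDerivAt_primitive_mul_log_add (hpos ht).ne') (fun t ht => ?_)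
    (fun t ht => ?_) (fun t ht => ?_) (fun t ht => ?_) (fun t ht => ?_)).trans_eq
    (by field_simp; norm_num)
  all_goals have hne := (hpos ht).ne'
  · refine ((hasDerivAt_id t).mul (hlog ht)).congr_deriv ?_
    simp only [id, one_mul, mul_one_div]
  · refine ((hlog ht).add ((hasDerivAt_id t).div (hadd t) hne)).congr_deriv ?_
    simp only [id]
    field_simp
    ring
  · refine (((hadd t).fun_inv hne).add ((hinv 2 ht).const_mul x)).congr_deriv ?_
    field_simp
    ring
  · refine ((hinv 2 ht).neg.sub ((hinv 3 ht).const_mul (2 * x))).congr_deriv ?_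
    field_simp
    ring
  · have ht₀ : 0 ≤ t := ha.trans ht.1
    have := hpos ht
    rw [Real.norm_of_nonneg (by positivity)]
    calc 2 * ((t + x) ^ 3)⁻¹ + 6 * x * ((t + x) ^ 4)⁻¹
        ≤ 2 * ((t + x) ^ 3)⁻¹ + 6 * (t + x) * ((t + x) ^ 4)⁻¹ := by gcongr; linarith
      _ = 8 / (t + x) ^ 3 := by field_simp; ring
      _ ≤ 8 / (a + x) ^ 3 := by gcongr; exact ht.1

theorem sum_range_one_div_natCast_add_cube_le {x : ℝ} (hx : 1 < x) (N : ℕ) :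
    ∑ k ∈ Finset.range N, 1 / (k + x) ^ 3 ≤ 1 / (x * (x - 1)) := by
  have one_div_cube_le (k : ℕ) :
      1 / (k + x) ^ 3 ≤ 1 / x * (1 / (k + x - 1) - 1 / (((k + 1 : ℕ) : ℝ) + x - 1)) := by
    have : (0 : ℝ) ≤ k := k.cast_nonneg
    have hpos : 0 < k + x - 1 := by linarith
    calc 1 / (k + x) ^ 3 = 1 / (k + x) * (1 / ((k + x) * (k + x))) := by field_simp
      _ ≤ 1 / x * (1 / ((k + x - 1) * (k + x))) := by gcongr <;> linarith
      _ = 1 / x * (1 / (k + x - 1) - 1 / (((k + 1 : ℕ) : ℝ) + x - 1)) := by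
          push_cast
          rw [add_right_comm, add_sub_cancel_right]
          field_simp
          ring
  have : (0 : ℝ) ≤ N := N.cast_nonneg
  have hpos : 0 < N + x - 1 := by linarith
  calc ∑ k ∈ Finset.range N, 1 / (k + x) ^ 3
      ≤ ∑ k ∈ Finset.range N, 1 / x * (1 / (k + x - 1) - 1 / (((k + 1 : ℕ) : ℝ) + x - 1)) :=
        Finset.sum_le_sum fun k _ => one_div_cube_le k
    _ = 1 / x * (1 / (x - 1) - 1 / (N + x - 1)) := by
        rw [← Finset.mul_sum, Finset.sum_range_sub' (fun k : ℕ => 1 / ((k : ℝ) + x - 1)),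
          Nat.cast_zero, zero_add]
    _ ≤ 1 / x * (1 / (x - 1)) := by
        gcongr
        exact sub_le_self _ (by positivity)
    _ = 1 / (x * (x - 1)) := by rw [one_div_mul_one_div]

theorem abs_sum_range_logShiftRemainder_le {x : ℝ} (hx : 1 < x) (N : ℕ) :
    |∑ k ∈ Finset.range N, logShiftRemainder x k| ≤ 1 / (48 * (x * (x - 1))) := by
  calc |∑ k ∈ Finset.range N, logShiftRemainder x k|
      ≤ ∑ k ∈ Finset.range N, 1 / (48 * (k + x) ^ 3) :=
        norm_sum_le_of_le _ fun k _ => norm_logShiftRemainder_le (by linarith) k.cast_nonneg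
    _ = 1 / 48 * ∑ k ∈ Finset.range N, 1 / (k + x) ^ 3 := by
        simp only [Finset.mul_sum, one_div_mul_one_div]
    _ ≤ 1 / 48 * (1 / (x * (x - 1))) := by
        gcongr
        exact sum_range_one_div_natCast_add_cube_le hx N
    _ = 1 / (48 * (x * (x - 1))) := one_div_mul_one_div _ _

theorem sum_range_logBarnesTerm_eq_logShiftMain {x : ℝ} (hx : 0 < x) (N : ℕ) :
    ∑ k ∈ Finset.range N, logBarnesTerm x k =
      logShiftMain x N - (N ^ 2 / 2 + N / 2 + 1 / 12) * Real.log N + N ^ 2 / 4 - N * x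
        + x ^ 2 / 2 * harmonic N - logGlaisherSeq N
        + (x ^ 2 / 2 - 1 / 12) * Real.log x + ∑ k ∈ Finset.range N, logShiftRemainder x k := by
  have hsum : ∑ k ∈ Finset.range N, ((0 : ℝ) + k + 1) * Real.log (0 + k + 1 + x) =
      logShiftMain x (0 + N) - logShiftMain x 0 +
        ∑ k ∈ Finset.range N, logShiftRemainder x (0 + k) :=
    sum_eq_eulerMaclaurinMain_add_sum_remainder _ (fun t : ℝ => t * Real.log (t + x)) _ 0 N
  simp only [zero_add] at hsum
  have main_zero : logShiftMain x 0 = -(x ^ 2 / 2 - 1 / 12) * Real.log x := by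
    simp only [logShiftMain, eulerMaclaurinMain, smul_eq_mul, zero_add]
    ring
  rw [sum_range_logBarnesTerm (by linarith), hsum, main_zero, logGlaisherSeq]
  ring

theorem tendsto_sq_mul_log_one_add_div_sub (x : ℝ) :
    Tendsto (fun N : ℕ => (N : ℝ) ^ 2 * Real.log (1 + x / N) - N * x) atTop
      (𝓝 (-(x ^ 2 / 2))) := by
  have taylor := (isBigO_log_one_add_sub_sum 2).comp_tendsto
    (tendsto_const_div_atTop_nhds_zero_nat x)
  have hrem : Tendsto (fun N : ℕ => (N : ℝ) ^ 2 * (Real.log (1 + x / N)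
      - ∑ i ∈ Finset.range 2, (-1) ^ i * (x / N) ^ (i + 1) / (i + 1))) atTop (𝓝 0) := by
    refine ((Asymptotics.isBigO_refl (fun N : ℕ => (N : ℝ) ^ 2) atTop).mul taylor).trans_tendsto
      ((tendsto_const_div_atTop_nhds_zero_nat (x ^ 3)).congr' ?_)
    filter_upwards [eventually_ne_atTop 0] with N hN
    simp only [Function.comp_apply, div_pow]
    field_simp
    ring
  rw [← zero_add (-(x ^ 2 / 2))]
  refine (hrem.add_const (-(x ^ 2 / 2))).congr' ?_
  filter_upwards [eventually_ne_atTop 0] with N hN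
  simp only [Finset.sum_range_succ, Finset.sum_range_zero]
  push_cast
  field_simp
  ring

theorem tendsto_logShiftMain_sub (x : ℝ) :
    Tendsto (fun N : ℕ => logShiftMain x N - (N ^ 2 / 2 + N / 2 + 1 / 12) * Real.log N + N ^ 2 / 4
        - N * x + x ^ 2 / 2 * harmonic N) atTop
      (𝓝 (x / 2 - x ^ 2 / 4 + Real.eulerMascheroniConstant * x ^ 2 / 2 + 1 / 12)) := by
  have h₀ : Tendsto (fun N : ℕ => Real.log (1 + x / N)) atTop (𝓝 0) := by
    have := (tendsto_const_div_atTop_nhds_zero_nat x).const_add 1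
    rw [add_zero] at this
    simpa using this.log one_ne_zero
  have h₁ : Tendsto (fun N : ℕ => (N : ℝ) * Real.log (1 + x / N)) atTop (𝓝 x) :=
    (Real.tendsto_mul_log_one_add_div_atTop x).comp tendsto_natCast_atTop_atTop
  have h₂ := tendsto_sq_mul_log_one_add_div_sub x
  have hquot := tendsto_natCast_div_add_atTop x
  have hlim := (((((h₂.const_mul (1 / 2)).add
    (Real.tendsto_harmonic_sub_log.const_mul (x ^ 2 / 2))).sub (h₀.const_mul (x ^ 2 / 2))).add
    (h₁.const_mul (1 / 2))).add (h₀.const_mul (1 / 12))).add (hquot.const_mul (1 / 12))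
  convert hlim.congr' ?_ using 2
  · ring
  filter_upwards [eventually_gt_atTop 0, tendsto_natCast_atTop_atTop.eventually_gt_atTop (-x)]
    with N hN hNx
  have hN' : (0 : ℝ) < N := Nat.cast_pos.2 hN
  have log_split : Real.log (1 + x / N) = Real.log (N + x) - Real.log N := by
    rw [← Real.log_div (by linarith) hN'.ne', add_div, div_self hN'.ne']
  simp only [logShiftMain, eulerMaclaurinMain, smul_eq_mul, log_split]
  ring

theorem abs_tsum_logBarnesTerm_sub_le {x : ℝ} (hx : 1 < x) :
    |∑' k, logBarnesTerm x k - ((x ^ 2 / 2 - 1 / 12) * Real.log x + x / 2 - x ^ 2 / 4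
      + Real.eulerMascheroniConstant * x ^ 2 / 2 + (deriv riemannZeta (-1)).re)|
      ≤ 1 / (48 * (x * (x - 1))) := by
  have hlim := (summable_logBarnesTerm x).hasSum.tendsto_sum_nat.sub
    (((tendsto_logShiftMain_sub x).sub tendsto_logGlaisherSeq).add_const
      ((x ^ 2 / 2 - 1 / 12) * Real.log x))
  refine (congrArg _ ?_).trans_le (le_of_tendsto hlim.abs (Eventually.of_forall fun N => ?_))
  · ring
  · rw [sum_range_logBarnesTerm_eq_logShiftMain (by linarith), add_sub_cancel_left]
    exact abs_sum_range_logShiftRemainder_le hx N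

theorem isBigO_logBarnesG_sub :
    (fun x => logBarnesG x - ((x ^ 2 / 2 - 1 / 12) * Real.log x - 3 / 4 * x ^ 2
        - x * (deriv riemannZeta 0).re + (deriv riemannZeta (-1)).re))
      =O[atTop] fun x : ℝ => x ^ (-2 : ℤ) := by
  refine Asymptotics.IsBigO.of_bound 1 ?_
  filter_upwards [eventually_ge_atTop 2] with x hx
  rw [norm_zpow, Real.norm_of_nonneg (by linarith : 0 ≤ x), zpow_neg]
  calc _ = |∑' k, logBarnesTerm x k - ((x ^ 2 / 2 - 1 / 12) * Real.log x + x / 2 - x ^ 2 / 4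
        + Real.eulerMascheroniConstant * x ^ 2 / 2 + (deriv riemannZeta (-1)).re)| := by
        rw [logBarnesG, Real.norm_eq_abs]
        ring_nf
    _ ≤ 1 / (48 * (x * (x - 1))) := abs_tsum_logBarnesTerm_sub_le (by linarith)
    _ ≤ 1 / x ^ 2 := by
        gcongr
        nlinarith
    _ = 1 * (x ^ (2 : ℤ))⁻¹ := by rw [one_div, one_mul]; rfl

theorem isBigO_log_add_one_sub_log :
    (fun x => (x ^ 2 / 2 - 1 / 12) * (Real.log (x + 1) - Real.log x)
        - (x / 2 - 1 / 4 + 1 / (12 * (x + 1))))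
      =O[atTop] fun x : ℝ => x ^ (-2 : ℤ) := by
  have taylor (n : ℕ) := (isBigO_log_one_add_sub_sum n).comp_tendsto tendsto_inv_atTop_zero
  have h₁ : _ =O[atTop] fun x : ℝ => x ^ (-2 : ℤ) :=
    ((taylor 1).const_mul_left (-(1 / 12))).congr_right fun x => by
      simp [zpow_neg]
  have h₃ : _ =O[atTop] fun x : ℝ => x ^ (-2 : ℤ) :=
    (((Asymptotics.isBigO_refl (fun x : ℝ => x ^ 2) atTop).mul (taylor 3)).const_mul_left
      (1 / 2)).congr_right fun x => by
      rcases eq_or_ne x 0 with rfl | hx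
      · simp
      · simp only [Function.comp_apply, inv_pow]
        field_simp
  have hquot : (fun x : ℝ => 1 / (12 * (x * (x + 1)))) =O[atTop] fun x => x ^ (-2 : ℤ) := by
    refine Asymptotics.IsBigO.of_bound 1 ?_
    filter_upwards [eventually_gt_atTop 0] with x hx
    rw [Real.norm_of_nonneg (by positivity), Real.norm_of_nonneg (by positivity), one_mul, zpow_neg,
      ← one_div]
    gcongr
    norm_cast
    nlinarith
  refine ((h₃.add h₁).add hquot).congr' ?_ .rfl
  filter_upwards [eventually_gt_atTop 0] with x hx
  have log_split : Real.log (1 + x⁻¹) = Real.log (x + 1) - Real.log x := by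
    rw [← Real.log_div (by linarith) hx.ne', add_div, div_self hx.ne', one_div]
  simp only [Function.comp_apply, log_split, Finset.sum_range_succ, Finset.sum_range_zero]
  push_cast
  field_simp
  ring

end Asymptotics

/-- Asymptotics of `log G(x+1)` as `x → ∞` along the positive reals:
`log G(x+1) = (x²/2 - 1/12)·log(x+1) - (3/4)x² - x/2 + 1/4 - x·ζ'(0) + ζ'(-1)
  - 1/(12(x+1)) + O(x⁻²)`. -/
theorem barnesG_log_asymptotic :
    (fun x : ℝ => Complex.log (BarnesG ((x : ℂ) + 1)) -
        (((x ^ 2 / 2 - 1 / 12) * Real.log (x + 1) - 3 / 4 * x ^ 2 - x / 2 + 1 / 4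
            - 1 / (12 * (x + 1)) : ℝ) : ℂ)
        + (x : ℂ) * deriv riemannZeta 0 - deriv riemannZeta (-1))
      =O[atTop] fun x : ℝ => x ^ (-2 : ℤ) := by
  have zeta_deriv_zero := ofReal_re_deriv_riemannZeta 0
  have zeta_deriv_neg_one := ofReal_re_deriv_riemannZeta (-1)
  push_cast at zeta_deriv_zero zeta_deriv_neg_one
  have hreal := isBigO_logBarnesG_sub.sub isBigO_log_add_one_sub_log
  refine (Complex.isBigO_ofReal_left.2 hreal).congr' ?_ .rfl
  filter_upwards [eventually_gt_atTop 0] with x hx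
  rw [log_barnesG_add_one (by linarith)]
  push_cast [zeta_deriv_zero, zeta_deriv_neg_one]
  ring

end
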